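/- Let q be a real number with 0 < q < 1. Then the generating function for the (generalized) heptagonal numbers m(5m−3)/2 satisfies 2·Σ_{m∈ℤ} q^{m(5m−3)/2} = ∏_{k=0}^{∞} (1 − q^{5(k+1)/4}) · [ ∏_{k=0}^{∞} (1 − q^{(10k−1)/8})(1 − q^{(10k+11)/8}) + ∏_{k=0}^{∞} (1 + q^{(10k−1)/8})(1 + q^{(10k+11)/8}) ]. -/

import Mathlib

/-!
The identity is two instances of the Jacobi triple product
`∏ (1 - p^(k+1)) (1 + z p^k) (1 + z⁻¹ p^(k+1)) = ∑_{m ∈ ℤ} p^(m(m-1)/2) z^m`,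
taken at `p = q^(5/4)` and `z = ∓q^(-1/8)`. Adding the two series cancels the odd terms and doubles
the even ones, and the term of index `2m` is `q^(m(5m-3)/2)`.

The triple product (`jacobi_triple`) is obtained as a limit. The `q`-binomial theorem
(`prod_eq_sum_qBinom`) with `2n` factors at `x = z p^(-n)` gives
`∏_{k<n} (1 + z p^k) (1 + z⁻¹ p^(k+1)) = ∑_m [2n choose n+m]_p p^(m(m-1)/2) z^m`
(`finite_triple`). As `n → ∞`, each Gaussian binomial coefficient
`(p)_{2n} / ((p)_{n+m} (p)_{n-m})` tends to `1 / (p)_∞` and all of them are bounded by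
`1 / (p)_∞^2`, so Tannery's theorem applies to the sum, the bounding series being a Jacobi theta
series.
-/

open Filter Topology Finset

/-- The finite `q`-Pochhammer symbol `(p; p)_n = (1 - p) (1 - p^2) ⋯ (1 - p^n)`. -/
noncomputable def qPoch (p : ℝ) (n : ℕ) : ℝ := ∏ k ∈ range n, (1 - p ^ (k + 1))

/-- The Gaussian binomial coefficient `[N choose j]_p`, defined by the `q`-Pascal recurrence. The
truncation in `N - j` is harmless, since the coefficient it multiplies vanishes for `j > N`. -/
noncomputable def qBinom (p : ℝ) : ℕ → ℕ → ℝ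
  | _, 0 => 1
  | 0, _ + 1 => 0
  | N + 1, j + 1 => qBinom p N (j + 1) + p ^ (N - j) * qBinom p N j

/-- The general term `p^(m(m-1)/2) z^m` of the triple product series. -/
noncomputable def thetaTerm (p z : ℝ) (m : ℤ) : ℝ := p ^ ((m : ℝ) * (m - 1) / 2) * z ^ m

lemma qBinom_zero_right (p : ℝ) (N : ℕ) : qBinom p N 0 = 1 := by
  cases N <;> simp [qBinom]

lemma qBinom_eq_zero (p : ℝ) : ∀ {N j : ℕ}, N < j → qBinom p N j = 0
  | _, 0, h => by omega
  | 0, j + 1, _ => by simp [qBinom]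
  | N + 1, j + 1, h => by
    rw [qBinom, qBinom_eq_zero p (by omega : N < j + 1), qBinom_eq_zero p (by omega : N < j)]
    simp

lemma qPoch_succ (p : ℝ) (n : ℕ) : qPoch p (n + 1) = qPoch p n * (1 - p ^ (n + 1)) := by
  simp [qPoch, prod_range_succ]

lemma qBinom_mul (p : ℝ) : ∀ N j k : ℕ, j + k = N →
    qBinom p N j * (qPoch p j * qPoch p k) = qPoch p N
  | N, 0, k, h => by
    obtain rfl : k = N := by omega
    simp [qBinom_zero_right, qPoch]
  | 0, j + 1, k, h => by omega
  | N + 1, j + 1, 0, h => by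
    obtain rfl : j = N := by omega
    have ih := qBinom_mul p j j 0 (by omega)
    rw [qBinom, qBinom_eq_zero p (Nat.lt_succ_self j), qPoch_succ]
    simp only [Nat.sub_self, pow_zero]
    linear_combination (1 - p ^ (j + 1)) * ih
  | N + 1, j + 1, k + 1, h => by
    have ih1 := qBinom_mul p N (j + 1) k (by omega)
    have ih2 := qBinom_mul p N j (k + 1) (by omega)
    have e : N - j = k + 1 := by omega
    have e' : p ^ (N + 1) = p ^ (k + 1) * p ^ (j + 1) := by rw [← pow_add]; congr 1; omega
    rw [qBinom, e]
    rw [qPoch_succ p N, e']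
    rw [qPoch_succ] at ih1 ih2 ⊢
    rw [qPoch_succ]
    linear_combination (1 - p ^ (k + 1)) * ih1 + p ^ (k + 1) * (1 - p ^ (j + 1)) * ih2

/-- The `q`-binomial theorem. -/
lemma prod_eq_sum_qBinom (p x : ℝ) (N : ℕ) :
    ∏ k ∈ range N, (1 + x * p ^ k)
      = ∑ j ∈ range (N + 1), qBinom p N j * (p ^ (j.choose 2) * x ^ j) := by
  induction N with
  | zero => simp [qBinom]
  | succ N ih =>
    rw [prod_range_succ, ih, mul_add, mul_one]
    have h1 : ∑ j ∈ range (N + 1), qBinom p N j * (p ^ (j.choose 2) * x ^ j)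
        = ∑ j ∈ range (N + 1), qBinom p N (j + 1) * (p ^ ((j + 1).choose 2) * x ^ (j + 1)) + 1 := by
      have := sum_range_succ (fun j => qBinom p N j * (p ^ (j.choose 2) * x ^ j)) (N + 1)
      rw [sum_range_succ', qBinom_eq_zero p (Nat.lt_succ_self N)] at this
      simp only [qBinom_zero_right] at this
      simp at this
      exact this.symm
    have h2 : (∑ j ∈ range (N + 1), qBinom p N j * (p ^ (j.choose 2) * x ^ j)) * (x * p ^ N)
        = ∑ j ∈ range (N + 1),
          p ^ (N - j) * qBinom p N j * (p ^ ((j + 1).choose 2) * x ^ (j + 1)) := by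
      rw [sum_mul]
      refine sum_congr rfl fun j hj => ?_
      have hj' : j ≤ N := by simpa [Nat.lt_succ_iff] using hj
      have e : p ^ N = p ^ (N - j) * p ^ j := by rw [← pow_add]; congr 1; omega
      have e' : (j + 1).choose 2 = j + j.choose 2 := by
        rw [Nat.choose_succ_succ' j 1, Nat.choose_one_right]
      rw [e, e', pow_add, pow_succ]
      ring
    rw [h2, h1, sum_range_succ' _ (N + 1)]
    simp only [qBinom, add_mul, sum_add_distrib]
    simp
    ring

lemma thetaTerm_succ {p z : ℝ} (hp : 0 < p) (hz : z ≠ 0) (m : ℤ) :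
    thetaTerm p z (m + 1) = thetaTerm p z m * (z * p ^ m) := by
  unfold thetaTerm
  rw [zpow_add_one₀ hz, ← Real.rpow_intCast p m]
  have : ((m + 1 : ℤ) : ℝ) * (((m + 1 : ℤ) : ℝ) - 1) / 2 = (m : ℝ) * (m - 1) / 2 + m := by
    push_cast; ring
  rw [this, Real.rpow_add hp]
  ring

/-- The constant relating the `q`-binomial theorem at `z p^(-n)` to the triple product: it is the
reciprocal of the lowest term of the series. -/
lemma thetaTerm_neg_mul {p z : ℝ} (hp : 0 < p) (hz : z ≠ 0) (n : ℕ) :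
    thetaTerm p z (-n) * ∏ k ∈ range n, (z / p ^ (k + 1)) = 1 := by
  induction n with
  | zero => simp [thetaTerm]
  | succ n ih =>
    have h := thetaTerm_succ hp hz (-((n + 1 : ℕ) : ℤ))
    rw [show -((n + 1 : ℕ) : ℤ) + 1 = -(n : ℤ) by push_cast; ring, zpow_neg, zpow_natCast] at h
    rw [h] at ih
    rw [prod_range_succ, ← ih]
    field_simp

lemma thetaTerm_shift {p z : ℝ} (hp : 0 < p) (hz : z ≠ 0) (n j : ℕ) :
    thetaTerm p z (j - n) * ∏ k ∈ range n, (z / p ^ (k + 1))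
      = p ^ (j.choose 2) * (z / p ^ n) ^ j := by
  induction j with
  | zero => simpa using thetaTerm_neg_mul hp hz n
  | succ j ih =>
    have e' : (j + 1).choose 2 = j + j.choose 2 := by
      rw [Nat.choose_succ_succ' j 1, Nat.choose_one_right]
    rw [show ((j + 1 : ℕ) : ℤ) - n = ((j : ℤ) - n) + 1 by push_cast; ring, thetaTerm_succ hp hz,
      e', pow_add, pow_succ, zpow_sub₀ hp.ne', zpow_natCast, zpow_natCast]
    linear_combination (z * (p ^ j / p ^ n)) * ih

/-- The coefficient `[2n choose n+m]_p` of the finite triple product, extended by zero to all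
integers `m`. -/
noncomputable def tripleCoeff (p : ℝ) (n : ℕ) (m : ℤ) : ℝ :=
  if -(n : ℤ) ≤ m then qBinom p (2 * n) (m + n).toNat else 0

/-- The finite form of the Jacobi triple product. -/
lemma finite_triple {p z : ℝ} (hp : 0 < p) (hz : z ≠ 0) (n : ℕ) :
    ∏ k ∈ range n, ((1 + z * p ^ k) * (1 + z⁻¹ * p ^ (k + 1)))
      = ∑' m : ℤ, tripleCoeff p n m * thetaTerm p z m := by
  have hinj : Function.Injective (fun j : ℕ => (j : ℤ) - n) := fun a b h => by
    simp only at h; omega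
  have hsupp : Function.support (fun m : ℤ => tripleCoeff p n m * thetaTerm p z m)
      ⊆ Set.range (fun j : ℕ => (j : ℤ) - n) := by
    intro m hm
    by_cases h : -(n : ℤ) ≤ m
    · exact ⟨(m + n).toNat, by simp only; omega⟩
    · simp [tripleCoeff, h] at hm
  have hc (j : ℕ) : tripleCoeff p n (j - n) = qBinom p (2 * n) j := by
    rw [tripleCoeff, if_pos (by omega)]
    congr 1
    omega
  have hpn : p ^ n ≠ 0 := (pow_pos hp n).ne'
  have hC : ∏ k ∈ range n, (z / p ^ (k + 1)) ≠ 0 :=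
    right_ne_zero_of_mul_eq_one (thetaTerm_neg_mul hp hz n)
  rw [← hinj.tsum_eq hsupp]
  rw [tsum_eq_sum (s := range (2 * n + 1))]
  · apply mul_right_cancel₀ hC
    simp only [hc]
    rw [sum_mul]
    simp only [mul_assoc, thetaTerm_shift hp hz]
    rw [← prod_eq_sum_qBinom, two_mul, prod_range_add, prod_mul_distrib, mul_assoc,
      ← prod_mul_distrib, mul_comm]
    congr 1
    · rw [← prod_range_reflect]
      refine prod_congr rfl fun k hk => ?_
      have hk' : k < n := by simpa using hk
      have e : p ^ n = p ^ k * p ^ (n - 1 - k + 1) := by rw [← pow_add]; congr 1; omega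
      rw [e]
      have := (pow_pos hp k).ne'
      have := (pow_pos hp (n - 1 - k + 1)).ne'
      field_simp
      ring
    · refine prod_congr rfl fun k hk => ?_
      rw [pow_add]
      field_simp
  · intro j hj
    have hj' : 2 * n < j := by simp at hj; omega
    simp only [hc, qBinom_eq_zero p hj', zero_mul]

/-- The series is summable because `|p^(m(m-1)/2) z^m|` is the norm of the term of a two-variable
Jacobi theta series with parameter `τ` in the upper half plane. -/
lemma summable_thetaTerm {p z : ℝ} (hp : 0 < p) (hp1 : p < 1) (hz : z ≠ 0) :
    Summable (thetaTerm p z) := by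
  have hl := Real.log_neg hp hp1
  have ht : 0 < ((-Real.log p / (2 * Real.pi) : ℝ) * Complex.I).im := by
    simp only [Complex.im_ofReal_mul, Complex.I_im, mul_one]
    exact div_pos (by linarith) (by positivity)
  have h := (summable_jacobiTheta₂_term_iff
    ((((Real.log p / 2 - Real.log |z|) / (2 * Real.pi) : ℝ) : ℂ) * Complex.I) _).2 ht
  refine Summable.of_norm ?_
  convert h.norm using 2 with m
  rw [norm_jacobiTheta₂_term]
  simp only [Complex.im_ofReal_mul, Complex.I_im, mul_one]
  rw [thetaTerm, norm_mul, norm_zpow, Real.norm_eq_abs, Real.norm_eq_abs, abs_of_pos (by positivity),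
    Real.rpow_def_of_pos hp, ← Real.rpow_intCast, Real.rpow_def_of_pos (abs_pos.2 hz),
    ← Real.exp_add]
  congr 1
  field_simp
  ring

lemma qPoch_pos {p : ℝ} (hp : 0 < p) (hp1 : p < 1) (n : ℕ) : 0 < qPoch p n :=
  prod_pos fun k _ => sub_pos.2 (pow_lt_one₀ hp.le hp1 (Nat.succ_ne_zero k))

lemma qPoch_le_one {p : ℝ} (hp : 0 < p) (hp1 : p < 1) (n : ℕ) : qPoch p n ≤ 1 :=
  prod_le_one (fun k _ => (sub_pos.2 (pow_lt_one₀ hp.le hp1 (Nat.succ_ne_zero k))).le)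
    fun k _ => sub_le_self _ (by positivity)

lemma summable_neg_pow {p : ℝ} (hp : 0 < p) (hp1 : p < 1) :
    Summable fun k : ℕ => -p ^ (k + 1) :=
  ((summable_nat_add_iff 1).2 (summable_geometric_of_lt_one hp.le hp1)).neg

lemma tendsto_qPoch {p : ℝ} (hp : 0 < p) (hp1 : p < 1) :
    Tendsto (qPoch p) atTop (𝓝 (∏' k : ℕ, (1 - p ^ (k + 1)))) := by
  have := (Real.multipliable_one_add_of_summable (summable_neg_pow hp hp1)).tendsto_prod_tprod_nat
  simpa only [← sub_eq_add_neg] using! this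

lemma qPoch_infty_pos {p : ℝ} (hp : 0 < p) (hp1 : p < 1) :
    0 < ∏' k : ℕ, (1 - p ^ (k + 1)) := by
  have h := Real.rexp_tsum_eq_tprod (f := fun k : ℕ => 1 + -p ^ (k + 1))
    (fun k => by
      rw [← sub_eq_add_neg]
      exact sub_pos.2 (pow_lt_one₀ hp.le hp1 (Nat.succ_ne_zero k)))
    (Real.summable_log_one_add_of_summable (summable_neg_pow hp hp1))
  simp only [← sub_eq_add_neg] at h
  rw [← h]
  exact Real.exp_pos _

lemma qPoch_infty_le {p : ℝ} (hp : 0 < p) (hp1 : p < 1) (n : ℕ) :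
    ∏' k : ℕ, (1 - p ^ (k + 1)) ≤ qPoch p n := by
  refine Antitone.le_of_tendsto (antitone_nat_of_succ_le fun n => ?_) (tendsto_qPoch hp hp1) n
  rw [qPoch_succ]
  exact mul_le_of_le_one_right (qPoch_pos hp hp1 n).le (sub_le_self _ (by positivity))

lemma qBinom_eq_div {p : ℝ} (hp : 0 < p) (hp1 : p < 1) {N j k : ℕ} (h : j + k = N) :
    qBinom p N j = qPoch p N / (qPoch p j * qPoch p k) := by
  rw [eq_div_iff (mul_pos (qPoch_pos hp hp1 j) (qPoch_pos hp hp1 k)).ne']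
  exact qBinom_mul p N j k h

lemma abs_qBinom_le {p : ℝ} (hp : 0 < p) (hp1 : p < 1) (N j : ℕ) :
    |qBinom p N j| ≤ 1 / (∏' k : ℕ, (1 - p ^ (k + 1))) ^ 2 := by
  have hpos := qPoch_infty_pos hp hp1
  rcases lt_or_ge N j with h | h
  · rw [qBinom_eq_zero p h, abs_zero]
    positivity
  · obtain ⟨k, rfl⟩ := Nat.exists_eq_add_of_le h
    have h1 := qPoch_pos hp hp1 j
    have h2 := qPoch_pos hp hp1 k
    have h3 := qPoch_pos hp hp1 (j + k)
    rw [qBinom_eq_div hp hp1 rfl, abs_of_pos (by positivity), sq]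
    exact div_le_div₀ zero_le_one (qPoch_le_one hp hp1 _) (by positivity)
      (mul_le_mul (qPoch_infty_le hp hp1 j) (qPoch_infty_le hp hp1 k) hpos.le h1.le)

lemma tendsto_tripleCoeff {p : ℝ} (hp : 0 < p) (hp1 : p < 1) (m : ℤ) :
    Tendsto (fun n => tripleCoeff p n m) atTop (𝓝 (∏' k : ℕ, (1 - p ^ (k + 1)))⁻¹) := by
  have hpos := qPoch_infty_pos hp hp1
  have hT := tendsto_qPoch hp hp1
  have t1 : Tendsto (fun n : ℕ => 2 * n) atTop atTop :=
    tendsto_id.const_mul_atTop' (by norm_num)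
  have t2 : Tendsto (fun n : ℕ => (m + n).toNat) atTop atTop :=
    tendsto_atTop.2 fun b => by
      filter_upwards [eventually_ge_atTop (b + m.natAbs)] with n hn
      omega
  have t3 : Tendsto (fun n : ℕ => (n - m).toNat) atTop atTop :=
    tendsto_atTop.2 fun b => by
      filter_upwards [eventually_ge_atTop (b + m.natAbs)] with n hn
      omega
  have key := (hT.comp t1).div ((hT.comp t2).mul (hT.comp t3)) (by positivity)
  rw [div_mul_cancel_left₀ hpos.ne'] at key
  refine key.congr' ?_
  filter_upwards [eventually_ge_atTop m.natAbs] with n hn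
  rw [tripleCoeff, if_pos (by omega), qBinom_eq_div hp hp1 (k := (n - m).toNat) (by omega)]
  rfl

/-- The factors are `1 + u_k` with `u` summable, so the partial products converge to the infinite
product even when some factors are negative. -/
lemma tendsto_prod_theta {p : ℝ} (hp : 0 < p) (hp1 : p < 1) (z : ℝ) :
    Tendsto (fun n => ∏ k ∈ range n, ((1 + z * p ^ k) * (1 + z⁻¹ * p ^ (k + 1)))) atTop
      (𝓝 (∏' k : ℕ, ((1 + z * p ^ k) * (1 + z⁻¹ * p ^ (k + 1))))) := by
  have hg := summable_geometric_of_lt_one hp.le hp1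
  have h1 := Real.multipliable_one_add_of_summable (hg.mul_left z)
  have h2 := Real.multipliable_one_add_of_summable
    (((summable_nat_add_iff 1).2 hg).mul_left z⁻¹)
  exact (h1.mul h2).tendsto_prod_tprod_nat

/-- The Jacobi triple product. -/
theorem jacobi_triple {p z : ℝ} (hp : 0 < p) (hp1 : p < 1) (hz : z ≠ 0) :
    (∏' k : ℕ, (1 - p ^ (k + 1))) * ∏' k : ℕ, ((1 + z * p ^ k) * (1 + z⁻¹ * p ^ (k + 1)))
      = ∑' m : ℤ, thetaTerm p z m := by
  have hpos := qPoch_infty_pos hp hp1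
  have hlim := tendsto_tsum_of_dominated_convergence (𝓕 := atTop)
    (f := fun (n : ℕ) (m : ℤ) => tripleCoeff p n m * thetaTerm p z m)
    (((summable_thetaTerm hp hp1 hz).norm).mul_left (1 / (∏' k : ℕ, (1 - p ^ (k + 1))) ^ 2))
    (fun m => (tendsto_tripleCoeff hp hp1 m).mul_const _)
    (Eventually.of_forall fun n m => by
      rw [norm_mul]
      refine mul_le_mul_of_nonneg_right ?_ (norm_nonneg _)
      rw [Real.norm_eq_abs, tripleCoeff]
      split_ifs
      · exact abs_qBinom_le hp hp1 _ _
      · rw [abs_zero]; positivity)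
  simp only [← finite_triple hp hz] at hlim
  rw [tendsto_nhds_unique (tendsto_prod_theta hp hp1 z) hlim, tsum_mul_left,
    mul_inv_cancel_left₀ hpos.ne']

theorem heptagonal_numbers_generating_function (q : ℝ) (hq0 : 0 < q) (hq1 : q < 1) :
    2 * ∑' m : ℤ, q ^ ((m : ℝ) * (5 * (m : ℝ) - 3) / 2)
    = (∏' k : ℕ, (1 - q ^ (5 * ((k : ℝ) + 1) / 4))) *
      ((∏' k : ℕ, ((1 - q ^ ((10 * (k : ℝ) - 1) / 8)) * (1 - q ^ ((10 * (k : ℝ) + 11) / 8))))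
        + ∏' k : ℕ, ((1 + q ^ ((10 * (k : ℝ) - 1) / 8)) * (1 + q ^ ((10 * (k : ℝ) + 11) / 8)))) := by
  set p : ℝ := q ^ (5 / 4 : ℝ) with hpdef
  set a : ℝ := q ^ (-1 / 8 : ℝ) with hadef
  have hp : 0 < p := Real.rpow_pos_of_pos hq0 _
  have hp1 : p < 1 := Real.rpow_lt_one hq0.le hq1 (by norm_num)
  have ha : 0 < a := Real.rpow_pos_of_pos hq0 _
  have e0 (k : ℕ) : q ^ (5 * ((k : ℝ) + 1) / 4) = p ^ (k + 1) := by
    rw [hpdef, ← Real.rpow_natCast, ← Real.rpow_mul hq0.le]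
    push_cast; ring_nf
  have e1 (k : ℕ) : q ^ ((10 * (k : ℝ) - 1) / 8) = a * p ^ k := by
    rw [hpdef, hadef, ← Real.rpow_natCast, ← Real.rpow_mul hq0.le, ← Real.rpow_add hq0]
    ring_nf
  have e2 (k : ℕ) : q ^ ((10 * (k : ℝ) + 11) / 8) = a⁻¹ * p ^ (k + 1) := by
    rw [hpdef, hadef, ← Real.rpow_natCast, ← Real.rpow_mul hq0.le, ← Real.rpow_neg hq0.le,
      ← Real.rpow_add hq0]
    push_cast; ring_nf
  simp only [e0, e1, e2]
  have j1 := jacobi_triple hp hp1 ha.ne'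
  have j2 := jacobi_triple hp hp1 (neg_ne_zero.2 ha.ne')
  simp only [inv_neg, neg_mul, ← sub_eq_add_neg] at j2
  rw [mul_add, j1, j2, ← (summable_thetaTerm hp hp1 (neg_ne_zero.2 ha.ne')).tsum_add
    (summable_thetaTerm hp hp1 ha.ne')]
  have hinj : Function.Injective (fun m : ℤ => 2 * m) := fun x y h => by
    simp only at h; omega
  rw [← hinj.tsum_eq (f := fun m => thetaTerm p (-a) m + thetaTerm p a m), ← tsum_mul_left]
  · refine tsum_congr fun m => ?_
    have hev : Even (2 * m) := even_two_mul m
    simp only [thetaTerm, hev.neg_zpow]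
    rw [hpdef, hadef, ← Real.rpow_intCast, ← Real.rpow_mul hq0.le, ← Real.rpow_mul hq0.le,
      ← Real.rpow_add hq0, two_mul]
    push_cast; ring_nf
  · intro m hm
    rcases Int.even_or_odd' m with ⟨c, rfl | rfl⟩
    · exact ⟨c, rfl⟩
    · have hodd : Odd (2 * c + 1) := odd_two_mul_add_one c
      simp [thetaTerm, hodd.neg_zpow] at hm
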